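/- Let s > 0, n ≥ 1, let E ⊆ ℝⁿ be a finite set, and let f : E → [0,∞). For x ∈ E and M ≥ 0 define Γ_f(x,M) := {P ∈ Γ(x,M) : P(x) = f(x)}. Then (Γ_f(x,M))_{x∈E,M≥0} is a shape field, and it is (C,1)-Whitney convex for some constant C depending only on n, s. -/

import Mathlib

open Set ENNReal
open scoped NNReal

noncomputable section

/-- The largest integer strictly less than `s` (for `s > 0`). -/
def lowFloor (s : ℝ) : ℕ := ⌈s⌉₊ - 1

variable {E : Type*} [NormedAddCommGroup E] [NormedSpace ℝ E]

/-- `max_{0 ≤ m < s} sup_{x ∈ Ω} |∇^m F(x)|`, valued in `ℝ≥0∞`. -/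
def derivSup (s : ℝ) (Ω : Set E) (F : E → ℝ) : ℝ≥0∞ :=
  ⨆ (m : ℕ) (_ : m ≤ lowFloor s) (x : E) (_ : x ∈ Ω),
    (‖iteratedFDerivWithin ℝ m F Ω x‖₊ : ℝ≥0∞)

/-- The homogeneous Hölder seminorm `‖F‖_{Ċ^s(Ω)}`, valued in `ℝ≥0∞`. -/
def holderSemi (s : ℝ) (Ω : Set E) (F : E → ℝ) : ℝ≥0∞ :=
  ⨆ (x : E) (_ : x ∈ Ω) (y : E) (_ : y ∈ Ω) (_ : x ≠ y),
    (‖iteratedFDerivWithin ℝ (lowFloor s) F Ω x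
        - iteratedFDerivWithin ℝ (lowFloor s) F Ω y‖₊ : ℝ≥0∞)
      / ENNReal.ofReal (‖x - y‖ ^ (s - (lowFloor s : ℝ)))

/-- The Hölder norm `‖F‖_{C^s(Ω)}`, valued in `ℝ≥0∞`. -/
def csNorm (s : ℝ) (Ω : Set E) (F : E → ℝ) : ℝ≥0∞ :=
  derivSup s Ω F + holderSemi s Ω F

/-- Membership in `C^s(Ω)`. -/
def MemCs (s : ℝ) (Ω : Set E) (F : E → ℝ) : Prop :=
  ContDiffOn ℝ (lowFloor s : ℕ∞) F Ω ∧ csNorm s Ω F ≠ ∞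

/-- The flat seminorm `‖F‖_{Ḟ^s(Ω)}`, valued in `ℝ≥0∞`.  (In `ℝ≥0∞` one has
`0/0 = 0` and `a/0 = ∞` for `a ≠ 0`, matching the paper's conventions; for
`0 < s < 1` the supremum is empty, hence `0`.) -/
def flatSemi (s : ℝ) (Ω : Set E) (F : E → ℝ) : ℝ≥0∞ :=
  ⨆ (m : ℕ) (_ : 1 ≤ m) (_ : m ≤ lowFloor s) (x : E) (_ : x ∈ Ω),
    ((‖iteratedFDerivWithin ℝ m F Ω x‖₊ : ℝ≥0∞) ^ s
      / ENNReal.ofReal (F x) ^ (s - (m : ℝ))) ^ (1 / (m : ℝ))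

/-- Membership in the cone `F^s(Ω)`. -/
def MemFs (s : ℝ) (Ω : Set E) (F : E → ℝ) : Prop :=
  MemCs s Ω F ∧ (∀ x ∈ Ω, 0 ≤ F x) ∧ flatSemi s Ω F ≠ ∞

/-- The norm `‖F‖_{F^s(Ω)} = ‖F‖_{C^s(Ω)} + ‖F‖_{Ḟ^s(Ω)}`. -/
def fsNorm (s : ℝ) (Ω : Set E) (F : E → ℝ) : ℝ≥0∞ :=
  csNorm s Ω F + flatSemi s Ω F

/-- `sup_{x ∈ Ω} |F(x)|`, valued in `ℝ≥0∞`. -/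
def supNormSet (Ω : Set E) (F : E → ℝ) : ℝ≥0∞ :=
  ⨆ (x : E) (_ : x ∈ Ω), (‖F x‖₊ : ℝ≥0∞)

/-- `P` is (the function given by) a polynomial of degree at most `D`. -/
def IsPolyDeg (D : ℕ) (P : E → ℝ) : Prop :=
  ContDiff ℝ (⊤ : ℕ∞) P ∧ ∀ x, iteratedFDeriv ℝ (D + 1) P x = 0

/-- The degree-`D` Taylor polynomial (jet) of `F` at `x`, as a function. -/
def jetAt (D : ℕ) (F : E → ℝ) (x : E) : E → ℝ :=
  fun y => ∑ m ∈ Finset.range (D + 1),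
    (iteratedFDeriv ℝ m F x fun _ => y - x) / m.factorial

/-- The degree-`D` Taylor polynomial of `F` at `x` using derivatives within `Ω`. -/
def jetWithinAt (D : ℕ) (F : E → ℝ) (Ω : Set E) (x : E) : E → ℝ :=
  fun y => ∑ m ∈ Finset.range (D + 1),
    (iteratedFDerivWithin ℝ m F Ω x fun _ => y - x) / m.factorial

/-- The pointwise flatness quantity `max_{1≤m<s} (|∇^m P(x)|^s / P(x)^{s-m})^{1/m}`. -/
def jetFlatAt (s : ℝ) (P : E → ℝ) (x : E) : ℝ≥0∞ :=
  ⨆ (m : ℕ) (_ : 1 ≤ m) (_ : m ≤ lowFloor s),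
    ((‖iteratedFDeriv ℝ m P x‖₊ : ℝ≥0∞) ^ s
      / ENNReal.ofReal (P x) ^ (s - (m : ℝ))) ^ (1 / (m : ℝ))

/-- The set `Γ(x₀, M)` of flat nonnegative jets. -/
def Gamma (s : ℝ) (x₀ : E) (M : ℝ) : Set (E → ℝ) :=
  {P | IsPolyDeg (lowFloor s) P ∧ 0 ≤ P x₀ ∧
    (∀ m ≤ lowFloor s, ‖iteratedFDeriv ℝ m P x₀‖ ≤ M) ∧
    jetFlatAt s P x₀ ≤ ENNReal.ofReal M}

/-- `‖P⃗‖_{J C^s(E)}` for a family of jets `P : E → (E → ℝ)`. -/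
def jetCNorm (s : ℝ) (Eset : Set E) (P : E → E → ℝ) : ℝ≥0∞ :=
  (⨆ (x : E) (_ : x ∈ Eset) (m : ℕ) (_ : m ≤ lowFloor s),
      (‖iteratedFDeriv ℝ m (P x) x‖₊ : ℝ≥0∞))
  + ⨆ (x : E) (_ : x ∈ Eset) (y : E) (_ : y ∈ Eset) (_ : x ≠ y)
      (m : ℕ) (_ : m ≤ lowFloor s),
      (‖iteratedFDeriv ℝ m (P x - P y) y‖₊ : ℝ≥0∞)
        / ENNReal.ofReal (‖x - y‖ ^ (s - (m : ℝ)))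

/-- `‖P⃗‖_{J Ḟ^s(E)}` for a family of jets. -/
def jetFlatNorm (s : ℝ) (Eset : Set E) (P : E → E → ℝ) : ℝ≥0∞ :=
  ⨆ (x : E) (_ : x ∈ Eset) (m : ℕ) (_ : 1 ≤ m) (_ : m ≤ lowFloor s),
    ((‖iteratedFDeriv ℝ m (P x) x‖₊ : ℝ≥0∞) ^ s
      / ENNReal.ofReal |P x x| ^ (s - (m : ℝ))) ^ (1 / (m : ℝ))

/-- `‖P⃗‖_{J F^s(E)}`. -/
def jetFsNorm (s : ℝ) (Eset : Set E) (P : E → E → ℝ) : ℝ≥0∞ :=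
  jetCNorm s Eset P + jetFlatNorm s Eset P

/-- The trace norm `‖f‖_{F^s(S)}` (with `inf ∅ = ∞`). -/
def traceNorm (s : ℝ) (S : Set E) (f : E → ℝ) : ℝ≥0∞ :=
  ⨅ (F : E → ℝ) (_ : MemFs s (univ : Set E) F ∧ ∀ x ∈ S, F x = f x),
    fsNorm s (univ : Set E) F


/-- A shape field on a (finite) set `Eset`: a family of convex sets of
polynomials of degree at most `⌊s⌋`, monotone in `M`. -/
def IsShapeField (s : ℝ) (Eset : Set E) (Γ : E → ℝ → Set (E → ℝ)) : Prop :=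
  (∀ x ∈ Eset, ∀ M : ℝ, 0 ≤ M →
    (∀ P ∈ Γ x M, IsPolyDeg (lowFloor s) P) ∧ Convex ℝ (Γ x M)) ∧
  (∀ x ∈ Eset, ∀ M M' : ℝ, 0 ≤ M → M ≤ M' → Γ x M ⊆ Γ x M')

/-- `(A₀, δ₀)`-Whitney convexity of a shape field. -/
def WhitneyConvex (s : ℝ) (Eset : Set E) (Γ : E → ℝ → Set (E → ℝ))
    (A₀ δ₀ : ℝ) : Prop :=
  ∀ δ : ℝ, 0 < δ → δ ≤ δ₀ → ∀ x₀ ∈ Eset, ∀ M : ℝ, 0 ≤ M →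
  ∀ P₁ ∈ Γ x₀ M, ∀ P₂ ∈ Γ x₀ M,
    (∀ m ≤ lowFloor s,
      ‖iteratedFDeriv ℝ m (P₁ - P₂) x₀‖ ≤ M * δ ^ (s - (m : ℝ))) →
  ∀ Q₁ Q₂ : E → ℝ, IsPolyDeg (lowFloor s) Q₁ → IsPolyDeg (lowFloor s) Q₂ →
    jetAt (lowFloor s) (fun z => Q₁ z ^ 2 + Q₂ z ^ 2) x₀ = (fun _ => 1) →
    (∀ m ≤ lowFloor s, ‖iteratedFDeriv ℝ m Q₁ x₀‖ ≤ δ ^ (-(m : ℝ))) →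
    (∀ m ≤ lowFloor s, ‖iteratedFDeriv ℝ m Q₂ x₀‖ ≤ δ ^ (-(m : ℝ))) →
    jetAt (lowFloor s) (fun z => Q₁ z ^ 2 * P₁ z + Q₂ z ^ 2 * P₂ z) x₀
      ∈ Γ x₀ (A₀ * M)

/-- The axis-parallel cube with center `c` and sidelength `δ` in `ℝⁿ`. -/
def cube (n : ℕ) (c : EuclideanSpace ℝ (Fin n)) (δ : ℝ) :
    Set (EuclideanSpace ℝ (Fin n)) :=
  {x | ∀ i : Fin n, |x i - c i| ≤ δ / 2}

theorem lowFloor_lt {s : ℝ} (hs : 0 < s) {m : ℕ} (hm : m ≤ lowFloor s) : (m : ℝ) < s := by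
  have h : 0 < ⌈s⌉₊ := Nat.ceil_pos.2 hs
  exact Nat.lt_ceil.1 (by unfold lowFloor at hm; omega)

/-! ### Polynomials and jets -/

/-- The coefficients of the Taylor polynomial `jetAt D F x`. -/
def jetSeries (D : ℕ) (F : E → ℝ) (x : E) : FormalMultilinearSeries ℝ E ℝ :=
  fun m => if m ≤ D then (m.factorial : ℝ)⁻¹ • iteratedFDeriv ℝ m F x else 0

theorem hasFiniteFPowerSeriesOnBall_jetAt (D : ℕ) (F : E → ℝ) (x : E) :
    HasFiniteFPowerSeriesOnBall (jetAt D F x) (jetSeries D F x) x (D + 1) ⊤ := by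
  refine .mk' (fun m hm => ?_) (by simp) (fun y _ => ?_)
  · simp [jetSeries, show ¬ m ≤ D by omega]
  · simp only [jetAt, add_sub_cancel_left]
    refine Finset.sum_congr rfl fun m hm => ?_
    have : m ≤ D := by simpa [Nat.lt_succ_iff] using hm
    simp [jetSeries, this, div_eq_inv_mul]

theorem isPolyDeg_jetAt (D : ℕ) (F : E → ℝ) (x : E) : IsPolyDeg D (jetAt D F x) := by
  have h := hasFiniteFPowerSeriesOnBall_jetAt D F x
  refine ⟨contDiff_iff_contDiffAt.2 fun y =>
    (h.cpolynomialAt_of_mem (by simp)).contDiffAt, fun y => ?_⟩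
  have hy := h.changeOrigin (y := y - x) (by simp)
  rw [add_sub_cancel] at hy
  ext v
  rw [hy.toHasFPowerSeriesOnBall.iteratedFDeriv_eq_sum_of_completeSpace, hy.finite _ le_rfl]
  simp

theorem jetAt_self (D : ℕ) (F : E → ℝ) (x : E) : jetAt D F x x = F x := by
  rw [jetAt, Finset.sum_eq_single 0]
  · simp
  · intro m _ hm
    have : Nonempty (Fin m) := ⟨⟨0, Nat.pos_of_ne_zero hm⟩⟩
    have : (fun _ : Fin m => x - x) = 0 := by ext; simp
    rw [this, ContinuousMultilinearMap.map_zero, zero_div]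
  · simp

theorem IsPolyDeg.jetAt_eq {D : ℕ} {P : E → ℝ} (hP : IsPolyDeg D P) (x : E) :
    jetAt D P x = P := by
  ext y
  have h := map_add_eq_sum_add_integral_iteratedFDeriv (f := P) (x := x) (y := y - x) (n := D)
    fun t _ => (hP.1.of_le (by exact_mod_cast le_top)).contDiffAt
  simp only [hP.2, add_sub_cancel] at h
  simpa [jetAt, div_eq_inv_mul] using h.symm

theorem IsPolyDeg.contDiff_omega {D : ℕ} {P : E → ℝ} (hP : IsPolyDeg D P) : ContDiff ℝ ⊤ P := by
  rw [← hP.jetAt_eq 0]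
  exact contDiff_iff_contDiffAt.2 fun y =>
    ((hasFiniteFPowerSeriesOnBall_jetAt D P 0).cpolynomialAt_of_mem (by simp)).contDiffAt

theorem iteratedFDeriv_jetAt {D m : ℕ} (hm : m ≤ D) {F : E → ℝ} (hF : ContDiff ℝ ⊤ F) (x : E) :
    iteratedFDeriv ℝ m (jetAt D F x) x = iteratedFDeriv ℝ m F x := by
  ext v
  rw [(hasFiniteFPowerSeriesOnBall_jetAt D F
    x).toHasFPowerSeriesOnBall.iteratedFDeriv_eq_sum_of_completeSpace]
  have (σ : Equiv.Perm (Fin m)) :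
      iteratedFDeriv ℝ m F x (fun i => v (σ i)) = iteratedFDeriv ℝ m F x v :=
    hF.contDiffAt.iteratedFDeriv_comp_perm v σ
  simp only [jetSeries, hm, if_true, smul_apply, this, smul_eq_mul,
    Finset.sum_const, Finset.card_univ, Fintype.card_perm, Fintype.card_fin, nsmul_eq_mul]
  have := Nat.factorial_ne_zero m
  field_simp

theorem IsPolyDeg.add {D : ℕ} {P Q : E → ℝ} (hP : IsPolyDeg D P) (hQ : IsPolyDeg D Q) :
    IsPolyDeg D (P + Q) := by
  refine ⟨hP.1.add hQ.1, fun x => ?_⟩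
  rw [iteratedFDeriv_add_apply (hP.contDiff_omega.of_le le_top).contDiffAt
    (hQ.contDiff_omega.of_le le_top).contDiffAt, hP.2, hQ.2, add_zero]

theorem IsPolyDeg.const_smul {D : ℕ} {P : E → ℝ} (c : ℝ) (hP : IsPolyDeg D P) :
    IsPolyDeg D (c • P) := by
  refine ⟨hP.1.const_smul c, fun x => ?_⟩
  rw [iteratedFDeriv_const_smul_apply (hP.contDiff_omega.of_le le_top).contDiffAt, hP.2, smul_zero]

/-! ### The flatness condition -/

/-- The bound on the `m`-th derivative of a jet with value `a` imposed by flatness at level `M`. -/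
def flatBound (s M a : ℝ) (m : ℕ) : ℝ := M ^ ((m : ℝ) / s) * a ^ (1 - (m : ℝ) / s)

theorem flatBound_nonneg {s M a : ℝ} (hM : 0 ≤ M) (ha : 0 ≤ a) (m : ℕ) :
    0 ≤ flatBound s M a m := by
  unfold flatBound; positivity

theorem flatBound_le {s M a : ℝ} {m : ℕ} (hms : (m : ℝ) < s) (ha : 0 ≤ a) (haM : a ≤ M) :
    flatBound s M a m ≤ M := by
  have hs : 0 < s := (Nat.cast_nonneg m).trans_lt hms
  have h1 : 0 ≤ 1 - (m : ℝ) / s := sub_nonneg.2 ((div_le_one hs).2 hms.le)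
  have hM := ha.trans haM
  calc flatBound s M a m ≤ M ^ ((m : ℝ) / s) * M ^ (1 - (m : ℝ) / s) := by
        unfold flatBound; gcongr
    _ = M := by
        rw [← Real.rpow_add_of_nonneg hM (by positivity) h1, add_sub_cancel, Real.rpow_one]

theorem flat_term_le_iff {s M a N : ℝ} {m : ℕ} (hm : 1 ≤ m) (hms : (m : ℝ) < s)
    (hM : 0 ≤ M) (ha : 0 ≤ a) (hN : 0 ≤ N) :
    (ENNReal.ofReal N ^ s / ENNReal.ofReal a ^ (s - (m : ℝ))) ^ (1 / (m : ℝ)) ≤ ENNReal.ofReal M ↔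
      N ≤ flatBound s M a m := by
  have hm0 : (0 : ℝ) < m := by exact_mod_cast hm
  have hs : 0 < s := hm0.trans hms
  have hsm : 0 ≤ s - (m : ℝ) := by linarith
  rw [one_div, ENNReal.rpow_inv_le_iff hm0, ENNReal.ofReal_rpow_of_nonneg hM hm0.le,
    ENNReal.ofReal_rpow_of_nonneg ha hsm, ENNReal.ofReal_rpow_of_nonneg hN hs.le,
    ENNReal.div_le_iff_le_mul (by simp) (by simp), ← ENNReal.ofReal_mul (by positivity),
    ENNReal.ofReal_le_ofReal_iff (by positivity),
    ← Real.rpow_le_rpow_iff hN (flatBound_nonneg hM ha m) hs, flatBound,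
    Real.mul_rpow (by positivity) (by positivity), ← Real.rpow_mul hM, ← Real.rpow_mul ha]
  rw [div_mul_cancel₀ _ hs.ne', sub_mul, div_mul_cancel₀ _ hs.ne', one_mul]

theorem mem_Gamma_iff {s M : ℝ} (hs : 0 < s) (hM : 0 ≤ M) {x : E} {P : E → ℝ} :
    P ∈ Gamma s x M ↔ IsPolyDeg (lowFloor s) P ∧ 0 ≤ P x ∧
      (∀ m ≤ lowFloor s, ‖iteratedFDeriv ℝ m P x‖ ≤ M) ∧
      ∀ m ≤ lowFloor s, ‖iteratedFDeriv ℝ m P x‖ ≤ flatBound s M (P x) m := by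
  refine and_congr_right fun _ => and_congr_right fun hP => and_congr_right fun _ => ?_
  have key (m : ℕ) (hm : 1 ≤ m) (hmD : m ≤ lowFloor s) :
      ((‖iteratedFDeriv ℝ m P x‖₊ : ℝ≥0∞) ^ s / ENNReal.ofReal (P x) ^ (s - (m : ℝ)))
        ^ (1 / (m : ℝ)) ≤ ENNReal.ofReal M ↔
      ‖iteratedFDeriv ℝ m P x‖ ≤ flatBound s M (P x) m := by
    rw [← flat_term_le_iff hm (lowFloor_lt hs hmD) hM hP (norm_nonneg _), ofReal_norm,
      enorm_eq_nnnorm]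
  simp only [jetFlatAt, iSup_le_iff]
  refine ⟨fun h m hmD => ?_, fun h m hm hmD => (key m hm hmD).2 (h m hmD)⟩
  rcases Nat.eq_zero_or_pos m with rfl | hm
  · simp [flatBound, abs_of_nonneg hP]
  · exact (key m hm hmD).1 (h m hm hmD)

theorem Gamma_mono {s M M' : ℝ} (hMM' : M ≤ M') {x : E} : Gamma s x M ⊆ Gamma s x M' :=
  fun _ hP => ⟨hP.1, hP.2.1, fun m hm => (hP.2.2.1 m hm).trans hMM',
    hP.2.2.2.trans (ENNReal.ofReal_le_ofReal hMM')⟩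

theorem convex_Gamma_value {s M : ℝ} (hs : 0 < s) (hM : 0 ≤ M) (x : E) (c : ℝ) :
    Convex ℝ {P ∈ Gamma s x M | P x = c} := by
  rintro P ⟨hP, hPc⟩ Q ⟨hQ, hQc⟩ a b ha hb hab
  rw [mem_Gamma_iff hs hM, hPc] at hP
  rw [mem_Gamma_iff hs hM, hQc] at hQ
  have hval : (a • P + b • Q) x = c := by simp [hPc, hQc, ← add_mul, hab]
  have hnorm {m : ℕ} {B : ℝ} (h1 : ‖iteratedFDeriv ℝ m P x‖ ≤ B)
      (h2 : ‖iteratedFDeriv ℝ m Q x‖ ≤ B) :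
      ‖iteratedFDeriv ℝ m (a • P + b • Q) x‖ ≤ B := by
    have hP' : ContDiffAt ℝ m P x := (hP.1.contDiff_omega.of_le le_top).contDiffAt
    have hQ' : ContDiffAt ℝ m Q x := (hQ.1.contDiff_omega.of_le le_top).contDiffAt
    have hPa : ContDiffAt ℝ m (a • P) x := hP'.const_smul a
    have hQb : ContDiffAt ℝ m (b • Q) x := hQ'.const_smul b
    rw [iteratedFDeriv_add_apply hPa hQb,
      iteratedFDeriv_const_smul_apply hP', iteratedFDeriv_const_smul_apply hQ']
    simpa using convex_closedBall (0 : E [×m]→L[ℝ] ℝ) B (by simpa using h1) (by simpa using h2)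
      ha hb hab
  refine ⟨?_, hval⟩
  rw [mem_Gamma_iff hs hM, hval]
  exact ⟨(hP.1.const_smul a).add (hQ.1.const_smul b), hP.2.1,
    fun m hm => hnorm (hP.2.2.1 m hm) (hQ.2.2.1 m hm),
    fun m hm => hnorm (hP.2.2.2 m hm) (hQ.2.2.2 m hm)⟩

/-! ### Whitney convexity -/

/-- A derivative of order `j` that is both flat and small at scale `δ` loses at most `δ ^ (-k)`
against the flatness bound of order `j + k`. -/
theorem rpow_neg_mul_le_flatBound {s M a δ d : ℝ} {j k : ℕ} (hjk : ((j + k : ℕ) : ℝ) < s)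
    (hM : 0 ≤ M) (ha : 0 ≤ a) (hδ : 0 < δ) (h1 : d ≤ M * δ ^ (s - (j : ℝ)))
    (h2 : d ≤ 2 * flatBound s M a j) :
    δ ^ (-(k : ℝ)) * d ≤ 2 * flatBound s M a (j + k) := by
  have hs : 0 < s := (Nat.cast_nonneg _).trans_lt hjk
  have he : 0 ≤ 1 - ((j + k : ℕ) : ℝ) / s := sub_nonneg.2 ((div_le_one hs).2 hjk.le)
  have hδs : (δ ^ s) ^ (1 - ((j + k : ℕ) : ℝ) / s) = δ ^ (s - ((j + k : ℕ) : ℝ)) := by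
    rw [← Real.rpow_mul hδ.le]; congr 1; field_simp
  rcases le_total (M * δ ^ s) a with h | h
  · have hB := flatBound_nonneg (s := s) hM ha (j + k)
    calc δ ^ (-(k : ℝ)) * d ≤ δ ^ (-(k : ℝ)) * (M * δ ^ (s - (j : ℝ))) := by gcongr
      _ = M * δ ^ (s - ((j + k : ℕ) : ℝ)) := by
        rw [mul_left_comm, ← Real.rpow_add hδ]; congr 2; push_cast; ring
      _ = M ^ (((j + k : ℕ) : ℝ) / s) * (M * δ ^ s) ^ (1 - ((j + k : ℕ) : ℝ) / s) := by
        rw [Real.mul_rpow hM (by positivity), ← mul_assoc,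
          ← Real.rpow_add_of_nonneg hM (by positivity) he, hδs, add_sub_cancel, Real.rpow_one]
      _ ≤ flatBound s M a (j + k) := by unfold flatBound; gcongr
      _ ≤ 2 * flatBound s M a (j + k) := by linarith
  · have hk : 0 ≤ (k : ℝ) / s := by positivity
    have ha' : a ^ ((k : ℝ) / s) ≤ M ^ ((k : ℝ) / s) * δ ^ (k : ℝ) := by
      calc a ^ ((k : ℝ) / s) ≤ (M * δ ^ s) ^ ((k : ℝ) / s) := by gcongr
        _ = M ^ ((k : ℝ) / s) * δ ^ (k : ℝ) := by
          rw [Real.mul_rpow hM (by positivity), ← Real.rpow_mul hδ.le, mul_div_cancel₀ _ hs.ne']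
    have hsplit : a ^ (1 - (j : ℝ) / s) = a ^ (1 - ((j + k : ℕ) : ℝ) / s) * a ^ ((k : ℝ) / s) := by
      rw [← Real.rpow_add_of_nonneg ha he hk]; congr 1; push_cast; ring
    calc δ ^ (-(k : ℝ)) * d
        ≤ δ ^ (-(k : ℝ)) * (2 * (M ^ ((j : ℝ) / s) * (a ^ (1 - ((j + k : ℕ) : ℝ) / s) *
            (M ^ ((k : ℝ) / s) * δ ^ (k : ℝ))))) := by
          rw [flatBound, hsplit] at h2
          refine mul_le_mul_of_nonneg_left (h2.trans ?_) (by positivity)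
          gcongr
      _ = (δ ^ (-(k : ℝ)) * δ ^ (k : ℝ)) * (2 * ((M ^ ((j : ℝ) / s) * M ^ ((k : ℝ) / s)) *
            a ^ (1 - ((j + k : ℕ) : ℝ) / s))) := by ring
      _ = 2 * flatBound s M a (j + k) := by
          rw [← Real.rpow_add hδ, neg_add_cancel, Real.rpow_zero, one_mul,
            ← Real.rpow_add_of_nonneg hM (by positivity) hk, flatBound]
          congr 3; push_cast; ring

theorem norm_iteratedFDeriv_sq_le {Q : E → ℝ} (hQ : ContDiff ℝ ⊤ Q) {x : E} {δ : ℝ} (hδ : 0 < δ)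
    {D : ℕ} (h : ∀ m ≤ D, ‖iteratedFDeriv ℝ m Q x‖ ≤ δ ^ (-(m : ℝ))) {m : ℕ} (hm : m ≤ D) :
    ‖iteratedFDeriv ℝ m (fun z => Q z ^ 2) x‖ ≤ 2 ^ m * δ ^ (-(m : ℝ)) := by
  simp only [pow_two]
  refine (norm_iteratedFDeriv_mul_le hQ hQ x (n := m) le_top).trans ?_
  have hsum : (2 : ℝ) ^ m = ∑ i ∈ Finset.range (m + 1), (m.choose i : ℝ) := by
    exact_mod_cast (Nat.sum_range_choose m).symm
  rw [hsum, Finset.sum_mul]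
  refine Finset.sum_le_sum fun i hi => ?_
  have him : i ≤ m := by simpa [Nat.lt_succ_iff] using hi
  calc _ ≤ (m.choose i : ℝ) * δ ^ (-(i : ℝ)) * δ ^ (-((m - i : ℕ) : ℝ)) := by
        gcongr
        · exact h i (by omega)
        · exact h _ (by omega)
    _ = _ := by
        rw [mul_assoc, ← Real.rpow_add hδ, Nat.cast_sub him]; congr 2; ring

theorem norm_iteratedFDeriv_partition_le {s M a δ : ℝ} (hs : 0 < s) (hM : 0 ≤ M) (ha : 0 ≤ a)
    (hδ : 0 < δ) {x : E} {P₁ P₂ Q₁ Q₂ : E → ℝ} (hP₁ : ContDiff ℝ ⊤ P₁) (hP₂ : ContDiff ℝ ⊤ P₂)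
    (hQ₁ : ContDiff ℝ ⊤ Q₁) (hQ₂ : ContDiff ℝ ⊤ Q₂)
    (hb₁ : ∀ m ≤ lowFloor s, ‖iteratedFDeriv ℝ m P₁ x‖ ≤ flatBound s M a m)
    (hb₂ : ∀ m ≤ lowFloor s, ‖iteratedFDeriv ℝ m P₂ x‖ ≤ flatBound s M a m)
    (hdiff : ∀ m ≤ lowFloor s,
      ‖iteratedFDeriv ℝ m (P₁ - P₂) x‖ ≤ M * δ ^ (s - (m : ℝ)))
    (hone : jetAt (lowFloor s) (fun z => Q₁ z ^ 2 + Q₂ z ^ 2) x = fun _ => 1)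
    (hq₂ : ∀ m ≤ lowFloor s, ‖iteratedFDeriv ℝ m Q₂ x‖ ≤ δ ^ (-(m : ℝ)))
    {m : ℕ} (hm : m ≤ lowFloor s) :
    ‖iteratedFDeriv ℝ m (fun z => Q₁ z ^ 2 * P₁ z + Q₂ z ^ 2 * P₂ z) x‖
      ≤ 3 ^ (lowFloor s + 1) * flatBound s M a m := by
  have hS : ContDiff ℝ ⊤ fun z => Q₁ z ^ 2 + Q₂ z ^ 2 := (hQ₁.pow 2).add (hQ₂.pow 2)
  have hR : ContDiff ℝ ⊤ ((fun z => Q₁ z ^ 2 + Q₂ z ^ 2) - fun _ => (1 : ℝ)) :=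
    hS.sub contDiff_const
  set R : E → ℝ := (fun z => Q₁ z ^ 2 + Q₂ z ^ 2) - fun _ => (1 : ℝ) with hRdef
  have hR0 (i : ℕ) (hi : i ≤ lowFloor s) : iteratedFDeriv ℝ i R x = 0 := by
    rw [hRdef, iteratedFDeriv_sub_apply (hS.of_le le_top).contDiffAt contDiffAt_const,
      ← iteratedFDeriv_jetAt hi hS, hone, sub_self]
  have hd (i : ℕ) (hi : i ≤ lowFloor s) :
      ‖iteratedFDeriv ℝ i (P₂ - P₁) x‖ ≤ M * δ ^ (s - (i : ℝ)) ∧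
      ‖iteratedFDeriv ℝ i (P₂ - P₁) x‖ ≤ 2 * flatBound s M a i := by
    constructor
    · rw [← neg_sub, iteratedFDeriv_neg_apply, norm_neg]
      exact hdiff i hi
    · rw [iteratedFDeriv_sub_apply (hP₂.of_le le_top).contDiffAt (hP₁.of_le le_top).contDiffAt]
      exact (norm_sub_le _ _).trans (by linarith [hb₁ i hi, hb₂ i hi])
  have hP₂₁ : ContDiff ℝ ⊤ (P₂ - P₁) := hP₂.sub hP₁
  have hU : ContDiff ℝ ⊤ fun z => Q₂ z ^ 2 * (P₂ - P₁) z := (hQ₂.pow 2).mul hP₂₁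
  have hPU : ContDiff ℝ ⊤ (P₁ + fun z => Q₂ z ^ 2 * (P₂ - P₁) z) := hP₁.add hU
  have hV : ContDiff ℝ ⊤ fun z => R z * P₁ z := hR.mul hP₁
  have hdecomp : (fun z => Q₁ z ^ 2 * P₁ z + Q₂ z ^ 2 * P₂ z)
      = (P₁ + fun z => Q₂ z ^ 2 * (P₂ - P₁) z) + fun z => R z * P₁ z := by
    ext z; simp [hRdef]; ring
  have hUle : ‖iteratedFDeriv ℝ m (fun z => Q₂ z ^ 2 * (P₂ - P₁) z) x‖
      ≤ 3 ^ m * (2 * flatBound s M a m) := by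
    refine (norm_iteratedFDeriv_mul_le (hQ₂.pow 2) hP₂₁ x (n := m) le_top).trans ?_
    have hsum : (3 : ℝ) ^ m = ∑ i ∈ Finset.range (m + 1), (m.choose i : ℝ) * 2 ^ i := by
      have := add_pow (2 : ℝ) 1 m
      norm_num at this
      rw [this]
      exact Finset.sum_congr rfl fun i _ => mul_comm _ _
    rw [hsum, Finset.sum_mul]
    refine Finset.sum_le_sum fun i hi => ?_
    have him : i ≤ m := by simpa [Nat.lt_succ_iff] using hi
    obtain ⟨h1, h2⟩ := hd (m - i) (by omega)
    have hmi : m - i + i = m := by omega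
    have h3 := rpow_neg_mul_le_flatBound (k := i) (by rw [hmi]; exact lowFloor_lt hs hm)
      hM ha hδ h1 h2
    rw [hmi] at h3
    calc _ ≤ (m.choose i : ℝ) * (2 ^ i * δ ^ (-(i : ℝ))) *
            ‖iteratedFDeriv ℝ (m - i) (P₂ - P₁) x‖ := by
          gcongr
          exact norm_iteratedFDeriv_sq_le hQ₂ hδ hq₂ (him.trans hm)
      _ = (m.choose i : ℝ) * 2 ^ i *
            (δ ^ (-(i : ℝ)) * ‖iteratedFDeriv ℝ (m - i) (P₂ - P₁) x‖) := by
          ring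
      _ ≤ _ := by gcongr
  have hV0 : ‖iteratedFDeriv ℝ m (fun z => R z * P₁ z) x‖ ≤ 0 := by
    refine (norm_iteratedFDeriv_mul_le hR hP₁ x (n := m) le_top).trans_eq ?_
    refine Finset.sum_eq_zero fun i hi => ?_
    have him : i ≤ m := by simpa [Nat.lt_succ_iff] using hi
    rw [hR0 i (him.trans hm)]
    simp
  rw [hdecomp, iteratedFDeriv_add_apply (hPU.of_le le_top).contDiffAt
    (hV.of_le le_top).contDiffAt, iteratedFDeriv_add_apply (hP₁.of_le le_top).contDiffAt
    (hU.of_le le_top).contDiffAt]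
  have hB := flatBound_nonneg (s := s) hM ha m
  have h3m : (3 : ℝ) ^ m ≤ 3 ^ lowFloor s := pow_le_pow_right₀ (by norm_num) hm
  have h31 : (1 : ℝ) ≤ 3 ^ lowFloor s := one_le_pow₀ (by norm_num)
  calc _ ≤ ‖iteratedFDeriv ℝ m P₁ x‖ + ‖iteratedFDeriv ℝ m (fun z => Q₂ z ^ 2 * (P₂ - P₁) z) x‖
        + ‖iteratedFDeriv ℝ m (fun z => R z * P₁ z) x‖ := norm_add₃_le
    _ ≤ 1 * flatBound s M a m + 3 ^ m * (2 * flatBound s M a m) + 0 := by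
        gcongr
        rw [one_mul]
        exact hb₁ m hm
    _ ≤ 3 ^ lowFloor s * flatBound s M a m
          + 3 ^ lowFloor s * (2 * flatBound s M a m) + 0 := by gcongr
    _ = _ := by ring

theorem mul_flatBound_le {s M a K : ℝ} {m : ℕ} (hs : 0 < s) (hm : 1 ≤ m) (hM : 0 ≤ M) (ha : 0 ≤ a)
    (hK : 1 ≤ K) : K * flatBound s M a m ≤ flatBound s (K ^ (s + 1) * M) a m := by
  have hK0 : 0 ≤ K := zero_le_one.trans hK
  have hm' : (1 : ℝ) ≤ m := by exact_mod_cast hm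
  have hKle : K ≤ (K ^ (s + 1)) ^ ((m : ℝ) / s) := by
    rw [← Real.rpow_mul hK0]
    refine Real.self_le_rpow_of_one_le hK ?_
    rw [← mul_div_assoc, le_div_iff₀ hs]
    nlinarith
  rw [flatBound, flatBound, Real.mul_rpow (by positivity) hM, mul_assoc]
  gcongr

/-- Lemma `Cd convex`: for finite `E ⊆ ℝⁿ` and
`f : E → [0,∞)`, the family `Γ_f(x,M) := {P ∈ Γ(x,M) : P(x) = f(x)}` is a
shape field which is `(C,1)`-Whitney convex for some `C = C(n,s)`. -/
theorem statement16 (n : ℕ) (hn : 1 ≤ n) (s : ℝ) (hs : 0 < s) :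
    ∃ C : ℝ, 0 < C ∧
      ∀ (Eset : Set (EuclideanSpace ℝ (Fin n))), Eset.Finite →
      ∀ f : EuclideanSpace ℝ (Fin n) → ℝ, (∀ x ∈ Eset, 0 ≤ f x) →
        IsShapeField s Eset (fun x M => {P ∈ Gamma s x M | P x = f x}) ∧
        WhitneyConvex s Eset (fun x M => {P ∈ Gamma s x M | P x = f x}) C 1 := by
  have hK : (1 : ℝ) ≤ 3 ^ (lowFloor s + 1) := one_le_pow₀ (by norm_num)
  refine ⟨(3 ^ (lowFloor s + 1)) ^ (s + 1), by positivity, fun Eset _ f _ => ⟨⟨?_, ?_⟩, ?_⟩⟩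
  · exact fun x _ M hM => ⟨fun P hP => hP.1.1, convex_Gamma_value hs hM x (f x)⟩
  · exact fun x _ M M' _ hMM' P hP => ⟨Gamma_mono hMM' hP.1, hP.2⟩
  · rintro δ hδ - x - M hM P₁ ⟨hP₁, hv₁⟩ P₂ ⟨hP₂, hv₂⟩ hdiff Q₁ Q₂ hQ₁ hQ₂ hone - hq₂
    rw [mem_Gamma_iff hs hM, hv₁] at hP₁
    rw [mem_Gamma_iff hs hM, hv₂] at hP₂
    have hfx : 0 ≤ f x := hP₁.2.1
    have hfM : f x ≤ M := by
      simpa [hv₁, abs_of_nonneg hfx] using hP₁.2.2.1 0 (Nat.zero_le _)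
    have hF : ContDiff ℝ ⊤ fun z => Q₁ z ^ 2 * P₁ z + Q₂ z ^ 2 * P₂ z :=
      ((hQ₁.contDiff_omega.pow 2).mul hP₁.1.contDiff_omega).add
        ((hQ₂.contDiff_omega.pow 2).mul hP₂.1.contDiff_omega)
    have hsq : Q₁ x ^ 2 + Q₂ x ^ 2 = 1 := by
      simpa [jetAt_self] using congrFun hone x
    have hval : jetAt (lowFloor s) (fun z => Q₁ z ^ 2 * P₁ z + Q₂ z ^ 2 * P₂ z) x x = f x := by
      rw [jetAt_self, hv₁, hv₂, ← add_mul, hsq, one_mul]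
    have hle (m : ℕ) (hm : m ≤ lowFloor s) := norm_iteratedFDeriv_partition_le hs hM hfx hδ
      hP₁.1.contDiff_omega hP₂.1.contDiff_omega hQ₁.contDiff_omega hQ₂.contDiff_omega
      hP₁.2.2.2 hP₂.2.2.2 hdiff hone hq₂ hm
    have hKC : (3 : ℝ) ^ (lowFloor s + 1) ≤ (3 ^ (lowFloor s + 1)) ^ (s + 1) :=
      Real.self_le_rpow_of_one_le hK (by linarith)
    refine ⟨?_, hval⟩
    rw [mem_Gamma_iff hs (by positivity), hval]
    refine ⟨isPolyDeg_jetAt _ _ _, hfx, fun m hm => ?_, fun m hm => ?_⟩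
    · rw [iteratedFDeriv_jetAt hm hF]
      refine (hle m hm).trans ?_
      gcongr
      · exact flatBound_nonneg hM hfx m
      · exact flatBound_le (lowFloor_lt hs hm) hfx hfM
    · rcases Nat.eq_zero_or_pos m with rfl | hm1
      · simp [flatBound, hval, abs_of_nonneg hfx]
      · rw [iteratedFDeriv_jetAt hm hF]
        exact (hle m hm).trans (mul_flatBound_le hs hm1 hM hfx hK)

end
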